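/- Let K = ℚ(q), let L_n be the Laurent polynomial ring over K in n variables (the group algebra of ℤ^n over K) with fraction field F_n, and let S_n act by permuting the variables. For every λ ∈ ℤ^n, the element P_λ := ∑_{σ∈S_n} σ( z^λ · ∏_{1≤i<j≤n} (1 − q⁻¹ z_i z_j⁻¹)·(1 − z_i z_j⁻¹)⁻¹ ) of F_n lies in (the image in F_n of) the Laurent polynomial ring L_n, and it is invariant under the action of S_n. -/

import Mathlib

noncomputable section

set_option synthInstance.maxHeartbeats 1000000

namespace InverseSatake

/-- The field `K = ℚ(q)` of rational functions over `ℚ`. -/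
abbrev K : Type := RatFunc ℚ

/-- The variable `q` of `K = ℚ(q)`. -/
abbrev q : K := RatFunc.X

/-- `L_n`: the Laurent polynomial ring over `K` in `n` variables, i.e. the group algebra
of `ℤ^n` over `K`. -/
abbrev Lau (n : ℕ) : Type := AddMonoidAlgebra K (Fin n → ℤ)

instance (n : ℕ) : IsDomain (Lau n) := NoZeroDivisors.to_isDomain _

/-- `F_n`: the field of fractions of `L_n`. -/
abbrev FF (n : ℕ) : Type _ := FractionRing (Lau n)

instance (n : ℕ) : Field (FF n) := inferInstance

variable {n : ℕ}

/-- The action of `σ ∈ S_n` on exponent vectors: `(σ·λ)ᵢ = λ_{σ⁻¹(i)}`. -/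
def permAddEquiv (σ : Equiv.Perm (Fin n)) : (Fin n → ℤ) ≃+ (Fin n → ℤ) where
  toFun v := v ∘ σ.symm
  invFun v := v ∘ σ
  left_inv v := by ext i; simp
  right_inv v := by ext i; simp
  map_add' v w := rfl

/-- The action of `S_n` on `L_n` by permuting the variables. -/
def actL (σ : Equiv.Perm (Fin n)) : Lau n ≃ₐ[K] Lau n :=
  AddMonoidAlgebra.domCongr K K (permAddEquiv σ)

/-- The action of `S_n` on `F_n` by permuting the variables. -/
def actF (σ : Equiv.Perm (Fin n)) : FF n ≃+* FF n :=
  IsFractionRing.ringEquivOfRingEquiv (actL σ).toRingEquiv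

/-- The exponent vector of the Laurent monomial `zᵢ z_j⁻¹`. -/
def eu (i j : Fin n) : Fin n → ℤ := Pi.single i 1 - Pi.single j 1

/-- The canonical embedding `L_n → F_n`. -/
def alg : Lau n →+* FF n := algebraMap (Lau n) (FF n)

/-- `P_λ = ∑_{σ ∈ S_n} σ( z^λ ∏_{i<j} (1 − q⁻¹ zᵢzⱼ⁻¹)(1 − zᵢzⱼ⁻¹)⁻¹ ) ∈ F_n`
(Macdonald's formula for the group `GL_n`). -/
def Pfun (lam : Fin n → ℤ) : FF n :=
  ∑ σ : Equiv.Perm (Fin n),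
    actF σ (alg (AddMonoidAlgebra.single lam 1) *
      ∏ i : Fin n, ∏ j ∈ Finset.Ioi i,
        (alg (1 - AddMonoidAlgebra.single (eu i j) q⁻¹)
          * (alg (1 - AddMonoidAlgebra.single (eu i j) 1))⁻¹))

/-- A matrix of polynomial values has determinant divisible by the Vandermonde determinant. -/
theorem vandermonde_dvd {R : Type*} [CommRing R] [Nontrivial R] (z : Fin n → R)
    (p : Fin n → Polynomial R) :
    (Matrix.vandermonde z).det ∣ (Matrix.of fun i j => (p j).eval (z i)).det := by
  set f : Polynomial R := ∏ i, (Polynomial.X - Polynomial.C (z i)) with hf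
  have hm : f.Monic := Polynomial.monic_prod_of_monic _ _ fun i _ => Polynomial.monic_X_sub_C _
  have hdeg : f.degree = n := by
    rw [Polynomial.degree_eq_natDegree hm.ne_zero, hf,
      Polynomial.natDegree_prod_of_monic _ _ fun i _ => Polynomial.monic_X_sub_C _]
    simp
  have hroot : ∀ i, f.eval (z i) = 0 := by
    intro i
    rw [hf, Polynomial.eval_prod]
    exact Finset.prod_eq_zero (Finset.mem_univ i) (by simp)
  have key : (Matrix.of fun i j => (p j).eval (z i)) =
      Matrix.vandermonde z * Matrix.of fun (k j : Fin n) => ((p j) %ₘ f).coeff k := by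
    ext i j
    have h1 : (p j).eval (z i) = ((p j) %ₘ f).eval (z i) := by
      conv_lhs => rw [← Polynomial.modByMonic_add_div (p j) f]
      simp [hroot]
    have h2 : ((p j) %ₘ f).degree < n := hdeg ▸ Polynomial.degree_modByMonic_lt _ hm
    simp only [Matrix.of_apply, Matrix.mul_apply, Matrix.vandermonde_apply]
    rw [h1, Polynomial.eval_eq_sum, ← Polynomial.sum_fin (fun e a => a * z i ^ e) (by simp) h2]
    exact Finset.sum_congr rfl fun k _ => mul_comm _ _
  rw [key, Matrix.det_mul]
  exact dvd_mul_right _ _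

/-- The variable `z_i`. -/
def zv (i : Fin n) : Lau n := AddMonoidAlgebra.single (Pi.single i 1) 1

theorem actL_single (σ : Equiv.Perm (Fin n)) (v : Fin n → ℤ) (a : K) :
    actL σ (AddMonoidAlgebra.single v a) = AddMonoidAlgebra.single (v ∘ σ.symm) a := by
  simp [actL, permAddEquiv]

theorem actL_zv (σ : Equiv.Perm (Fin n)) (i : Fin n) : actL σ (zv i) = zv (σ i) := by
  rw [zv, actL_single, zv]
  congr 1
  ext k
  simp only [Function.comp, Pi.single_apply, Equiv.symm_apply_eq]

theorem zv_injective : Function.Injective (zv : Fin n → Lau n) := by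
  intro i j h
  have hcoef := congrArg (fun f : Lau n => f.coeff (Pi.single i 1)) h
  by_contra hij
  have hne : (Pi.single j 1 : Fin n → ℤ) ≠ Pi.single i 1 := by
    intro h2
    have := congrFun h2 i
    simp [hij] at this
  simp [zv, AddMonoidAlgebra.coeff_single, hne] at hcoef

theorem prod_single {ι : Type*} (s : Finset ι) (v : ι → Fin n → ℤ) :
    ∏ i ∈ s, (AddMonoidAlgebra.single (v i) 1 : Lau n)
      = AddMonoidAlgebra.single (∑ i ∈ s, v i) 1 := by
  classical
  induction s using Finset.induction_on with
  | empty => simp [AddMonoidAlgebra.one_def]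
  | insert a s ha ih => rw [Finset.prod_insert ha, Finset.sum_insert ha, ih,
      AddMonoidAlgebra.single_mul_single, one_mul]

theorem zv_pow (i : Fin n) (m : ℕ) :
    zv i ^ m = AddMonoidAlgebra.single (Pi.single i (m : ℤ)) (1 : K) := by
  rw [zv, AddMonoidAlgebra.single_pow, one_pow]
  congr 1
  ext k
  by_cases h : k = i
  · subst h; simp
  · simp [h]

theorem single_nat (m : Fin n → ℕ) :
    (AddMonoidAlgebra.single (fun i => (m i : ℤ)) 1 : Lau n) = ∏ i, zv i ^ m i := by
  simp_rw [zv_pow]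
  rw [prod_single]
  congr 1
  exact (Finset.univ_sum_single _).symm

/-- The Vandermonde determinant. -/
def VV (n : ℕ) : Lau n := (Matrix.vandermonde (zv : Fin n → Lau n)).det

/-- Antisymmetrization. -/
def alt (g : Lau n) : Lau n :=
  ∑ σ : Equiv.Perm (Fin n), ((Equiv.Perm.sign σ : ℤ) : Lau n) * actL σ g

theorem alt_single (v : Fin n → ℤ) (a : K) : VV n ∣ alt (AddMonoidAlgebra.single v a) := by
  obtain ⟨N, hN⟩ : ∃ N : ℕ, ∀ i, 0 ≤ v i + N := by
    refine ⟨∑ i, (v i).natAbs, fun i => ?_⟩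
    have := Finset.single_le_sum (f := fun i => (v i).natAbs) (fun _ _ => Nat.zero_le _)
      (Finset.mem_univ i)
    omega
  set m : Fin n → ℕ := fun i => (v i + N).toNat with hm
  have hv : (AddMonoidAlgebra.single v a : Lau n) =
      AddMonoidAlgebra.single (fun _ => -(N : ℤ)) a * ∏ i, zv i ^ m i := by
    rw [← single_nat, AddMonoidAlgebra.single_mul_single, mul_one]
    congr 1
    ext i
    have := hN i
    simp only [hm, Pi.add_apply]
    omega
  have hdet : alt (AddMonoidAlgebra.single v a) =
      AddMonoidAlgebra.single (fun _ => -(N : ℤ)) a *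
        (Matrix.of fun i j => (Polynomial.X ^ m j : Polynomial (Lau n)).eval (zv i)).det := by
    rw [Matrix.det_apply', Finset.mul_sum, alt]
    refine Finset.sum_congr rfl fun σ _ => ?_
    rw [hv, map_mul, map_prod, actL_single]
    simp only [map_pow, actL_zv, Matrix.of_apply, Polynomial.eval_pow, Polynomial.eval_X]
    exact mul_left_comm _ _ _
  rw [hdet]
  exact Dvd.dvd.mul_left (vandermonde_dvd _ _) _

theorem alt_dvd (g : Lau n) : VV n ∣ alt g := by
  induction g using AddMonoidAlgebra.induction_linear with
  | zero => simp [alt]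
  | add f g hf hg =>
    have : alt (f + g) = alt f + alt g := by
      simp [alt, mul_add, Finset.sum_add_distrib]
    rw [this]
    exact dvd_add hf hg
  | single v a => exact alt_single v a

theorem VV_ne_zero : VV n ≠ 0 := Matrix.det_vandermonde_ne_zero_iff.2 zv_injective

theorem actL_VV (σ : Equiv.Perm (Fin n)) :
    actL σ (VV n) = ((Equiv.Perm.sign σ : ℤ) : Lau n) * VV n := by
  rw [VV, ← Matrix.det_permute, AlgEquiv.map_det]
  congr 1
  ext i j
  simp [Matrix.vandermonde_apply, actL_zv]

theorem actF_alg (σ : Equiv.Perm (Fin n)) (g : Lau n) : actF σ (alg g) = alg (actL σ g) := by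
  simp [actF, alg]

theorem alg_injective : Function.Injective (alg : Lau n → FF n) :=
  IsFractionRing.injective (Lau n) (FF n)

theorem actF_mul (σ τ : Equiv.Perm (Fin n)) (x : FF n) :
    actF σ (actF τ x) = actF (σ * τ) x := by
  have hL : ∀ g : Lau n, actL σ (actL τ g) = actL (σ * τ) g := by
    intro g
    induction g using AddMonoidAlgebra.induction_linear with
    | zero => simp
    | add f g hf hg => simp [hf, hg]
    | single v a => simp only [actL_single]; rfl
  obtain ⟨a, b, -, rfl⟩ := IsFractionRing.div_surjective (A := Lau n) x
  change actF σ (actF τ (alg a / alg b)) = actF (σ * τ) (alg a / alg b)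
  simp only [map_div₀, actF_alg, hL]

theorem VV_eq : VV n = (∏ i : Fin n, ∏ j ∈ Finset.Ioi i, zv j) *
    ∏ i : Fin n, ∏ j ∈ Finset.Ioi i, (1 - AddMonoidAlgebra.single (eu i j) 1 : Lau n) := by
  rw [VV, Matrix.det_vandermonde]
  simp_rw [← Finset.prod_mul_distrib]
  refine Finset.prod_congr rfl fun i _ => Finset.prod_congr rfl fun j _ => ?_
  rw [mul_sub, mul_one, zv, zv, AddMonoidAlgebra.single_mul_single, one_mul]
  congr 2
  simp [eu]

theorem summand_eq (lam : Fin n → ℤ) : ∃ G : Lau n,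
    (alg (AddMonoidAlgebra.single lam 1) *
      ∏ i : Fin n, ∏ j ∈ Finset.Ioi i,
        (alg (1 - AddMonoidAlgebra.single (eu i j) q⁻¹)
          * (alg (1 - AddMonoidAlgebra.single (eu i j) 1))⁻¹)) = alg G / alg (VV n) := by
  refine ⟨AddMonoidAlgebra.single lam 1 * (∏ i : Fin n, ∏ j ∈ Finset.Ioi i, zv j) *
    ∏ i : Fin n, ∏ j ∈ Finset.Ioi i, (1 - AddMonoidAlgebra.single (eu i j) q⁻¹), ?_⟩
  have h0 : alg (VV n) ≠ 0 := by
    rw [← map_zero alg]; exact alg_injective.ne VV_ne_zero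
  rw [eq_div_iff h0]
  rw [VV_eq, map_mul] at h0 ⊢
  have h2 := right_ne_zero_of_mul h0
  simp only [Finset.prod_mul_distrib, Finset.prod_inv_distrib, map_mul, map_prod] at h2 ⊢
  field_simp

/-- For every `λ ∈ ℤ^n`, the element `P_λ` of `F_n` lies in (the image of) the Laurent
polynomial ring `L_n`, and it is invariant under the action of `S_n`. -/
theorem Pfun_mem_laurent_and_invariant (n : ℕ) (lam : Fin n → ℤ) :
    (∃ p : Lau n, alg p = Pfun lam) ∧
      ∀ σ : Equiv.Perm (Fin n), actF σ (Pfun lam) = Pfun lam := by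
  constructor
  · obtain ⟨G, hG⟩ := summand_eq lam
    obtain ⟨p, hp⟩ := alt_dvd G
    have h0 : alg (VV n) ≠ 0 := by
      rw [← map_zero alg]; exact alg_injective.ne VV_ne_zero
    refine ⟨p, ?_⟩
    have : alg p = alg (alt G) / alg (VV n) := by
      rw [hp, map_mul, mul_div_cancel_left₀ _ h0]
    rw [this, Pfun, alt, map_sum, Finset.sum_div]
    refine Finset.sum_congr rfl fun σ _ => ?_
    rw [hG, map_div₀, actF_alg, actF_alg, actL_VV, map_mul, map_mul, map_intCast]
    rcases Int.units_eq_one_or (Equiv.Perm.sign σ) with h | h <;> simp [h, neg_div, div_neg]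
  · intro σ
    rw [Pfun, map_sum]
    simp_rw [actF_mul]
    exact Fintype.sum_equiv (Equiv.mulLeft σ) _ _ fun τ => rfl

end InverseSatake
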